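/- Let F be a field, a, b ∈ F with a ≠ 0, b ≠ 0 and ab − b + 1 ≠ 0, and let x, y ∈ F with B(x) ≠ 0, B(y) ≠ 0 and A(y) ≠ 0. Then the function (y−x)/(y·B(x)) transforms under the simultaneous involution ρ in both variables into (y−x)/A(y); that is, (ρ(y) − ρ(x))/(ρ(y)·B(ρ(x))) = (y − x)/A(y), where ρ(x) = −A(x)/B(x). -/

import Mathlib

/-- A(x) = (a·x − a + 1)/a -/
def Af {F : Type*} [Field F] (a x : F) : F := (a * x - a + 1) / a

/-- B(x) = b·x − x + 1 -/
def Bf {F : Type*} [Field F] (b x : F) : F := b * x - x + 1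

/-- μ = −(a·b − b + 1)/a -/
def muf {F : Type*} [Field F] (a b : F) : F := -(a * b - b + 1) / a

/-- k(x) = B(x)/(a·b·x·A(x)) -/
def kf {F : Type*} [Field F] (a b x : F) : F := Bf b x / (a * b * x * Af a x)

/-- ρ(x) = −A(x)/B(x) -/
def rhof {F : Type*} [Field F] (a b x : F) : F := -(Af a x) / Bf b x

/-- σ(x) = −x/B(x) -/
def sigf {F : Type*} [Field F] (b x : F) : F := -x / Bf b x

/-!
The map `ρ = -A / B` is linear fractional with determinant `μ`, so `ρ y - ρ x` is
`μ * (y - x) / (B x * B y)`. The combination `B - (b - 1) * A` cancels the linear term and is the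
constant `-μ`, so `B (ρ x) = -μ / B x`. In the quotient, `μ` and the denominators `B x * B y`
cancel.
-/

section

variable {F : Type*} [Field F] {a b x y : F}

lemma muf_ne_zero (ha : a ≠ 0) (hab : a * b - b + 1 ≠ 0) : muf a b ≠ 0 :=
  div_ne_zero (neg_ne_zero.mpr hab) ha

lemma Af_mul_Bf_sub_Af_mul_Bf (ha : a ≠ 0) (b x y : F) :
    Af a x * Bf b y - Af a y * Bf b x = muf a b * (y - x) := by
  unfold Af Bf muf
  field_simp
  ring

lemma Bf_sub_mul_Af (ha : a ≠ 0) (b x : F) :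
    Bf b x - (b - 1) * Af a x = -muf a b := by
  unfold Af Bf muf
  field_simp
  ring

lemma rhof_sub_rhof (ha : a ≠ 0) (hBx : Bf b x ≠ 0) (hBy : Bf b y ≠ 0) :
    rhof a b y - rhof a b x = muf a b * (y - x) / (Bf b x * Bf b y) := by
  rw [← Af_mul_Bf_sub_Af_mul_Bf ha b x y, rhof, rhof, div_sub_div _ _ hBy hBx]
  ring

lemma Bf_rhof (ha : a ≠ 0) (hBx : Bf b x ≠ 0) :
    Bf b (rhof a b x) = -muf a b / Bf b x := by
  calc Bf b (rhof a b x) = 1 - (b - 1) * Af a x / Bf b x := by rw [Bf, rhof]; ring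
    _ = (Bf b x - (b - 1) * Af a x) / Bf b x := by rw [sub_div, div_self hBx]
    _ = -muf a b / Bf b x := by rw [Bf_sub_mul_Af ha]

lemma rhof_mul_Bf_rhof (ha : a ≠ 0) (hBx : Bf b x ≠ 0) (y : F) :
    rhof a b y * Bf b (rhof a b x) = muf a b * Af a y / (Bf b x * Bf b y) := by
  rw [Bf_rhof ha hBx, rhof, div_mul_div_comm, neg_mul_neg, mul_comm (Af a y),
    mul_comm (Bf b y)]

end

/-- (ρ(y) − ρ(x))/(ρ(y)·B(ρ(x))) = (y − x)/A(y). -/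
theorem stmt_8 {F : Type*} [Field F] (a b : F) (ha : a ≠ 0) (hb : b ≠ 0)
    (hab : a * b - b + 1 ≠ 0) (x y : F) (hBx : Bf b x ≠ 0) (hBy : Bf b y ≠ 0)
    (hAy : Af a y ≠ 0) :
    (rhof a b y - rhof a b x) / (rhof a b y * Bf b (rhof a b x)) = (y - x) / Af a y := by
  rw [rhof_sub_rhof ha hBx hBy, rhof_mul_Bf_rhof ha hBx,
    div_div_div_cancel_right₀ (mul_ne_zero hBx hBy), mul_div_mul_left _ _ (muf_ne_zero ha hab)]
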